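/- Let D ≥ 4 be an even integer, λ = D/2 − 1, and e ∈ ℝ^D with ‖e‖ = 1. Write z = u + iv for points of the open upper half-plane, and let ∂_z = ½(∂_u − i∂_v), ∂_{z̄} = ½(∂_u + i∂_v) be the Wirtinger derivatives, so z − z̄ = 2iv. Let f be a twice continuously differentiable complex-valued function on {z ∈ ℂ : Im z > 0} and define h : ℝ^D ∖ ℝ·e → ℂ by h(x) = f(z(x)) with z(x) = ⟨x, e⟩ + i‖x − ⟨x, e⟩e‖. Then h is twice continuously differentiable and its Euclidean Laplacian Δh = Σ_{j=1}^{D} ∂²h/∂x_j² satisfies, for all x ∈ ℝ^D ∖ ℝ·e, Δh(x) = 4·[ (1/(z − z̄))·∂_z∂_{z̄}((z − z̄)f) + ((1 − λ)/(z − z̄))·(∂_z f − ∂_{z̄} f) ] evaluated at z = z(x); equivalently Δh(x) = (∂_u²f + ∂_v²f + ((D−2)/v)·∂_v f)(z(x)). -/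

import Mathlib

open MeasureTheory RealInnerProductSpace

/-- Directional derivative `∂_u` of a function `ℂ → ℂ` (real derivative in the
direction `1`). -/
noncomputable def pdu (f : ℂ → ℂ) (z : ℂ) : ℂ := fderiv ℝ f z 1

/-- Directional derivative `∂_v` of a function `ℂ → ℂ` (real derivative in the
direction `i`). -/
noncomputable def pdv (f : ℂ → ℂ) (z : ℂ) : ℂ := fderiv ℝ f z Complex.I

/-- The Wirtinger derivative `∂_z = ½(∂_u − i ∂_v)`. -/
noncomputable def wdz (f : ℂ → ℂ) (z : ℂ) : ℂ := (pdu f z - Complex.I * pdv f z) / 2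

/-- The Wirtinger derivative `∂_z̄ = ½(∂_u + i ∂_v)`. -/
noncomputable def wdzbar (f : ℂ → ℂ) (z : ℂ) : ℂ := (pdu f z + Complex.I * pdv f z) / 2

/-- The Euclidean Laplacian `Δh = Σ_j ∂²h/∂x_j²` on `ℝ^D`. -/
noncomputable def lap {D : ℕ} (h : EuclideanSpace ℝ (Fin D) → ℂ)
    (x : EuclideanSpace ℝ (Fin D)) : ℂ :=
  ∑ j : Fin D,
    fderiv ℝ (fun y => fderiv ℝ h y (EuclideanSpace.single j 1)) x
      (EuclideanSpace.single j 1)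

/-!
The coordinate `z : ℝ^D ∖ ℝe → ℂ` has a coisometric derivative, `Dz ∘ Dz† = id`, because `e` and the
unit vector pointing away from the axis are orthonormal. The chain rule for second derivatives then
collapses to `Δ(f ∘ z) = (Δf) ∘ z + Df(Δz)`. Here `Re z` is linear, hence harmonic, while `Im z` is
the norm on the `(D - 1)`-dimensional space `eᗮ` composed with the orthogonal projection, so
`Δz = ((D - 2) / Im z) i`. The Wirtinger form follows from the Leibniz rule, using
`∂_z (z - z̄) = 1`, `∂_z̄ (z - z̄) = -1` and `4 ∂_z ∂_z̄ = Δ`.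
-/

open InnerProductSpace Laplacian
open Module (finrank)
open scoped InnerProduct Topology ComplexConjugate

section SecondDerivative

variable {𝕜 E F G : Type*} [NontriviallyNormedField 𝕜]
  [NormedAddCommGroup E] [NormedSpace 𝕜 E] [NormedAddCommGroup F] [NormedSpace 𝕜 F]
  [NormedAddCommGroup G] [NormedSpace 𝕜 G] {x : E}

theorem differentiableAt_fderiv_apply {f : E → F} (hf : ContDiffAt 𝕜 2 f x) (v : E) :
    DifferentiableAt 𝕜 (fun y ↦ fderiv 𝕜 f y v) x :=
  ((hf.fderiv_right one_add_one_eq_two.le).differentiableAt one_ne_zero).clm_apply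
    (differentiableAt_const v)

theorem fderiv_fderiv_apply {f : E → F} (hf : ContDiffAt 𝕜 2 f x) (v w : E) :
    fderiv 𝕜 (fun y ↦ fderiv 𝕜 f y v) x w = fderiv 𝕜 (fderiv 𝕜 f) x w v := by
  have hf' : DifferentiableAt 𝕜 (fderiv 𝕜 f) x :=
    (hf.fderiv_right one_add_one_eq_two.le).differentiableAt one_ne_zero
  simp [fderiv_clm_apply hf' (differentiableAt_const v)]

theorem fderiv_fderiv_comp {f : F → G} {g : E → F} (hf : ContDiffAt 𝕜 2 f (g x))
    (hg : ContDiffAt 𝕜 2 g x) (v w : E) :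
    fderiv 𝕜 (fderiv 𝕜 (f ∘ g)) x v w =
      fderiv 𝕜 (fderiv 𝕜 f) (g x) (fderiv 𝕜 g x v) (fderiv 𝕜 g x w)
        + fderiv 𝕜 f (g x) (fderiv 𝕜 (fderiv 𝕜 g) x v w) := by
  have hf' : DifferentiableAt 𝕜 (fderiv 𝕜 f) (g x) :=
    (hf.fderiv_right one_add_one_eq_two.le).differentiableAt one_ne_zero
  have hg' : DifferentiableAt 𝕜 (fderiv 𝕜 g) x :=
    (hg.fderiv_right one_add_one_eq_two.le).differentiableAt one_ne_zero
  have hgx : DifferentiableAt 𝕜 g x := hg.differentiableAt two_ne_zero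
  have chain_rule :
      fderiv 𝕜 (f ∘ g) =ᶠ[𝓝 x] fun y ↦ ((fderiv 𝕜 f ∘ g) y).comp (fderiv 𝕜 g y) := by
    filter_upwards [hg.continuousAt.eventually (hf.eventually (by simp)),
      hg.eventually (by simp)] with y hfy hgy
    exact fderiv_comp y (hfy.differentiableAt two_ne_zero) (hgy.differentiableAt two_ne_zero)
  rw [chain_rule.fderiv_eq, fderiv_clm_comp (hf'.comp x hgx) hg', fderiv_comp x hf' hgx]
  simp [add_comm]

end SecondDerivative

section Laplacian

variable {E F G : Type*} [NormedAddCommGroup E] [InnerProductSpace ℝ E] [FiniteDimensional ℝ E]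
  [NormedAddCommGroup G] [NormedSpace ℝ G] {x : E}

theorem laplacian_eq_sum_fderiv_fderiv {ι : Type*} [Fintype ι] (b : OrthonormalBasis ι ℝ E)
    (f : E → G) (x : E) : Δ f x = ∑ i, fderiv ℝ (fderiv ℝ f) x (b i) (b i) := by
  simp [laplacian_eq_iteratedFDeriv_orthonormalBasis f b, iteratedFDeriv_two_apply]

theorem laplacian_continuousLinearMap (L : E →L[ℝ] G) (x : E) : Δ (L : E → G) x = 0 := by
  have hL : fderiv ℝ L = fun _ ↦ L := funext fun _ ↦ L.fderiv
  simp [laplacian_eq_sum_fderiv_fderiv (stdOrthonormalBasis ℝ E), hL]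

variable [NormedAddCommGroup F] [InnerProductSpace ℝ F] [FiniteDimensional ℝ F]

theorem sum_bilinear_apply_of_comp_adjoint_eq_id {ι κ : Type*} [Fintype ι] [Fintype κ]
    (b : OrthonormalBasis ι ℝ E) (c : OrthonormalBasis κ ℝ F) {L : E →L[ℝ] F}
    (hL : L ∘L L† = .id ℝ F) (B : F →L[ℝ] F →L[ℝ] G) :
    ∑ i, B (L (b i)) (L (b i)) = ∑ k, B (c k) (c k) := by
  classical
  have coord (k : κ) (v : E) : ⟪c k, L v⟫ = ⟪(L†) (c k), v⟫ := (L.adjoint_inner_left v _).symm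
  have ortho (k l : κ) : ⟪(L†) (c k), (L†) (c l)⟫ = if k = l then (1 : ℝ) else 0 := by
    rw [L.adjoint_inner_left, ← L.comp_apply, hL, ContinuousLinearMap.id_apply,
      orthonormal_iff_ite.mp c.orthonormal]
  calc ∑ i, B (L (b i)) (L (b i))
      = ∑ i, ∑ k, ∑ l, (⟪(L†) (c k), b i⟫ * ⟪b i, (L†) (c l)⟫) • B (c l) (c k) := by
        refine Finset.sum_congr rfl fun i _ ↦ ?_
        conv_lhs => rw [← c.sum_repr' (L (b i))]
        simp only [map_sum, map_smul, sum_apply, smul_apply, Finset.smul_sum, smul_smul, coord,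
          real_inner_comm (b i)]
    _ = ∑ k, ∑ l, (∑ i, ⟪(L†) (c k), b i⟫ * ⟪b i, (L†) (c l)⟫) • B (c l) (c k) := by
        rw [Finset.sum_comm]
        simp only [Finset.sum_comm (γ := ι), Finset.sum_smul]
    _ = ∑ k, B (c k) (c k) := by simp [b.sum_inner_mul_inner, ortho]

theorem laplacian_comp_of_fderiv_comp_adjoint_eq_id {f : F → G} {g : E → F}
    (hf : ContDiffAt ℝ 2 f (g x)) (hg : ContDiffAt ℝ 2 g x)
    (hL : fderiv ℝ g x ∘L (fderiv ℝ g x)† = .id ℝ F) :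
    Δ (f ∘ g) x = Δ f (g x) + fderiv ℝ f (g x) (Δ g x) := by
  simp only [laplacian_eq_sum_fderiv_fderiv (stdOrthonormalBasis ℝ E),
    laplacian_eq_sum_fderiv_fderiv (stdOrthonormalBasis ℝ F), fderiv_fderiv_comp hf hg,
    Finset.sum_add_distrib, map_sum, sum_bilinear_apply_of_comp_adjoint_eq_id
      (stdOrthonormalBasis ℝ E) (stdOrthonormalBasis ℝ F) hL]

end Laplacian

section Norm

variable {E : Type*} [NormedAddCommGroup E] [InnerProductSpace ℝ E] {x : E}

theorem hasFDerivAt_norm (hx : x ≠ 0) : HasFDerivAt (‖·‖) (‖x‖⁻¹ • innerSL ℝ x) x := by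
  have hsqrt := (hasStrictFDerivAt_norm_sq x).hasFDerivAt.sqrt (by positivity)
  simp only [Real.sqrt_sq (norm_nonneg _)] at hsqrt
  convert hsqrt using 1
  module

theorem fderiv_fderiv_norm_apply_self (hx : x ≠ 0) (v : E) :
    fderiv ℝ (fderiv ℝ (‖·‖)) x v v = ‖v‖ ^ 2 / ‖x‖ - ⟪x, v⟫ ^ 2 / ‖x‖ ^ 3 := by
  have hx' : ‖x‖ ≠ 0 := norm_ne_zero_iff.mpr hx
  have first : fderiv ℝ (‖·‖) =ᶠ[𝓝 x] fun y : E ↦ ‖y‖⁻¹ • innerSL ℝ y := by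
    filter_upwards [isOpen_ne.mem_nhds hx] with y hy using (hasFDerivAt_norm hy).fderiv
  have hinv : HasFDerivAt (fun y : E ↦ ‖y‖⁻¹) _ x :=
    (hasDerivAt_inv hx').comp_hasFDerivAt x (hasFDerivAt_norm hx)
  have second := hinv.smul (innerSL ℝ (E := E)).hasFDerivAt
  calc fderiv ℝ (fderiv ℝ (norm : E → ℝ)) x v v
      = ‖x‖⁻¹ * ⟪v, v⟫ + -(‖x‖ ^ 2)⁻¹ * (‖x‖⁻¹ * ⟪x, v⟫) * ⟪x, v⟫ := by
        rw [first.fderiv_eq]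
        exact congrArg (fun L ↦ L v v) second.fderiv
    _ = ‖v‖ ^ 2 / ‖x‖ - ⟪x, v⟫ ^ 2 / ‖x‖ ^ 3 := by
        rw [real_inner_self_eq_norm_sq]
        field_simp
        ring

theorem laplacian_norm [FiniteDimensional ℝ E] (hx : x ≠ 0) :
    Δ (norm : E → ℝ) x = (finrank ℝ E - 1) / ‖x‖ := by
  have hx' : ‖x‖ ≠ 0 := norm_ne_zero_iff.mpr hx
  let b := stdOrthonormalBasis ℝ E
  calc Δ (norm : E → ℝ) x = ∑ i, (‖b i‖ ^ 2 / ‖x‖ - ⟪x, b i⟫ ^ 2 / ‖x‖ ^ 3) := by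
        simp only [laplacian_eq_sum_fderiv_fderiv b, fderiv_fderiv_norm_apply_self hx]
    _ = finrank ℝ E / ‖x‖ - ‖x‖ ^ 2 / ‖x‖ ^ 3 := by
        simp [Finset.sum_sub_distrib, ← Finset.sum_mul, b.sum_sq_inner_left, div_eq_mul_inv]
    _ = (finrank ℝ E - 1) / ‖x‖ := by field_simp

theorem contDiffAt_norm_orthogonalProjectionOnto {n : WithTop ℕ∞} (K : Submodule ℝ E)
    [K.HasOrthogonalProjection] (hx : K.orthogonalProjectionOnto x ≠ 0) :
    ContDiffAt ℝ n (fun y ↦ ‖K.orthogonalProjectionOnto y‖) x :=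
  K.orthogonalProjectionOnto.contDiff.contDiffAt.norm ℝ hx

theorem hasFDerivAt_norm_orthogonalProjectionOnto (K : Submodule ℝ E) [K.HasOrthogonalProjection]
    (hx : K.orthogonalProjectionOnto x ≠ 0) :
    HasFDerivAt (fun y ↦ ‖K.orthogonalProjectionOnto y‖)
      (innerSL ℝ (‖K.orthogonalProjectionOnto x‖⁻¹ • (K.orthogonalProjectionOnto x : E))) x := by
  refine ((hasFDerivAt_norm hx).comp x K.orthogonalProjectionOnto.hasFDerivAt).congr_fderiv ?_
  ext v
  simp

theorem laplacian_norm_orthogonalProjectionOnto [FiniteDimensional ℝ E] (K : Submodule ℝ E)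
    (hx : K.orthogonalProjectionOnto x ≠ 0) :
    Δ (fun y ↦ ‖K.orthogonalProjectionOnto y‖) x =
      (finrank ℝ K - 1) / ‖K.orthogonalProjectionOnto x‖ := by
  let P : E →L[ℝ] K := K.orthogonalProjectionOnto
  have hP : fderiv ℝ P x ∘L (fderiv ℝ P x)† = .id ℝ K := by
    rw [P.fderiv, K.adjoint_orthogonalProjectionOnto]
    ext v
    simp [P]
  have hcomp := laplacian_comp_of_fderiv_comp_adjoint_eq_id (contDiffAt_norm ℝ hx)
    P.contDiff.contDiffAt hP
  rw [laplacian_continuousLinearMap, map_zero, add_zero, laplacian_norm hx] at hcomp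
  exact hcomp

end Norm

section AxialCoord

variable {E : Type*} [NormedAddCommGroup E] [InnerProductSpace ℝ E] {e x : E}

/-- The real-linear map `v ↦ ⟨a, v⟩ + i⟨b, v⟩`. For `a` the axis and `b` the radial unit vector at a
point it is the derivative of `axialCoord` there. -/
noncomputable def innerComplex (a b : E) : E →L[ℝ] ℂ :=
  (innerSL ℝ a).smulRight 1 + (innerSL ℝ b).smulRight Complex.I

theorem innerComplex_comp_adjoint [CompleteSpace E] {a b : E} (ha : ‖a‖ = 1) (hb : ‖b‖ = 1)
    (hab : ⟪a, b⟫ = 0) : innerComplex a b ∘L (innerComplex a b)† = .id ℝ ℂ := by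
  have adjoint_eq :
      Complex.reCLM.smulRight a + Complex.imCLM.smulRight b = (innerComplex a b)† := by
    rw [ContinuousLinearMap.eq_adjoint_iff]
    intro w v
    have inner_axial : ⟪w, innerComplex a b v⟫ = w.re * ⟪a, v⟫ + w.im * ⟪b, v⟫ := by
      simp [innerComplex, Complex.inner, mul_comm]
    simp [inner_axial, inner_add_left, real_inner_smul_left]
  rw [← adjoint_eq, innerComplex]
  ext w
  simp [ha, hb, hab, real_inner_comm]

/-- The coordinate `z(x)` of the theorem: position along the axis `ℝ ∙ e` plus `i` times the
distance to that axis, for a unit vector `e`. -/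
noncomputable def axialCoord (e x : E) : ℂ :=
  ((⟪x, e⟫ : ℝ) : ℂ) + (‖x - (⟪x, e⟫ : ℝ) • e‖ : ℝ) * Complex.I

theorem axialCoord_im (e x : E) : (axialCoord e x).im = ‖x - ⟪x, e⟫ • e‖ := by
  simp [axialCoord]

theorem axialCoord_im_pos (hx : x ∉ ℝ ∙ e) : 0 < (axialCoord e x).im := by
  rw [axialCoord_im, norm_pos_iff, sub_ne_zero]
  exact fun h ↦ hx (Submodule.mem_span_singleton.mpr ⟨_, h.symm⟩)

theorem orthogonalProjectionOnto_orthogonal_singleton_ne_zero (hx : x ∉ ℝ ∙ e) :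
    (ℝ ∙ e)ᗮ.orthogonalProjectionOnto x ≠ 0 := by
  rwa [Ne, Submodule.orthogonalProjectionOnto_eq_zero_iff, Submodule.orthogonal_orthogonal]

theorem coe_orthogonalProjectionOnto_orthogonal_singleton (he : ‖e‖ = 1) (x : E) :
    ((ℝ ∙ e)ᗮ.orthogonalProjectionOnto x : E) = x - ⟪x, e⟫ • e := by
  rw [← Submodule.starProjection_apply, Submodule.starProjection_orthogonal_val,
    Submodule.starProjection_unit_singleton ℝ he, real_inner_comm]

theorem axialCoord_im_eq_norm_orthogonalProjectionOnto (he : ‖e‖ = 1) (x : E) :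
    (axialCoord e x).im = ‖(ℝ ∙ e)ᗮ.orthogonalProjectionOnto x‖ := by
  rw [axialCoord_im, ← coe_orthogonalProjectionOnto_orthogonal_singleton he, Submodule.coe_norm]

theorem axialCoord_eq_add_comp (he : ‖e‖ = 1) :
    axialCoord e = ⇑((innerSL ℝ e).smulRight (1 : ℂ)) +
      ContinuousLinearMap.toSpanSingleton ℝ Complex.I ∘
        fun y ↦ ‖(ℝ ∙ e)ᗮ.orthogonalProjectionOnto y‖ := by
  ext y
  rw [← Complex.re_add_im (axialCoord e y), axialCoord_im_eq_norm_orthogonalProjectionOnto he]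
  simp [axialCoord, real_inner_comm]

theorem contDiffAt_axialCoord {n : WithTop ℕ∞} (he : ‖e‖ = 1) (hx : x ∉ ℝ ∙ e) :
    ContDiffAt ℝ n (axialCoord e) x := by
  rw [axialCoord_eq_add_comp he]
  exact (ContinuousLinearMap.contDiff _).contDiffAt.add
    ((ContinuousLinearMap.contDiff _).contDiffAt.comp x
      (contDiffAt_norm_orthogonalProjectionOnto _
        (orthogonalProjectionOnto_orthogonal_singleton_ne_zero hx)))

theorem exists_hasFDerivAt_axialCoord (he : ‖e‖ = 1) (hx : x ∉ ℝ ∙ e) :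
    ∃ n : E, ‖n‖ = 1 ∧ ⟪e, n⟫ = 0 ∧ HasFDerivAt (axialCoord e) (innerComplex e n) x := by
  set p := (ℝ ∙ e)ᗮ.orthogonalProjectionOnto x
  have hp : p ≠ 0 := orthogonalProjectionOnto_orthogonal_singleton_ne_zero hx
  refine ⟨‖p‖⁻¹ • (p : E), norm_smul_inv_norm (mt Submodule.coe_eq_zero.mp hp), ?_, ?_⟩
  · rw [real_inner_smul_right, Submodule.mem_orthogonal_singleton_iff_inner_right.mp p.2, mul_zero]
  · rw [axialCoord_eq_add_comp he]
    exact (ContinuousLinearMap.hasFDerivAt _).add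
      ((hasFDerivAt_norm_orthogonalProjectionOnto _ hp).smul_const Complex.I)

variable [FiniteDimensional ℝ E]

theorem finrank_orthogonal_singleton (he : ‖e‖ = 1) :
    (finrank ℝ (ℝ ∙ e)ᗮ : ℝ) = finrank ℝ E - 1 := by
  have hdim := (ℝ ∙ e).finrank_add_finrank_orthogonal
  rw [finrank_span_singleton (norm_pos_iff.mp (he ▸ one_pos))] at hdim
  rw [← hdim]
  push_cast
  ring

theorem laplacian_axialCoord (he : ‖e‖ = 1) (hx : x ∉ ℝ ∙ e) :
    Δ (axialCoord e) x = ((finrank ℝ E - 2 : ℝ) / (axialCoord e x).im) • Complex.I := by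
  have hp := orthogonalProjectionOnto_orthogonal_singleton_ne_zero hx
  have hr : ContDiffAt ℝ 2 (fun y ↦ ‖(ℝ ∙ e)ᗮ.orthogonalProjectionOnto y‖) x :=
    contDiffAt_norm_orthogonalProjectionOnto _ hp
  rw [axialCoord_im_eq_norm_orthogonalProjectionOnto he, axialCoord_eq_add_comp he,
    ContDiffAt.laplacian_add (ContinuousLinearMap.contDiff _).contDiffAt
      ((ContinuousLinearMap.contDiff _).contDiffAt.comp x hr),
    laplacian_continuousLinearMap, zero_add, hr.laplacian_CLM_comp_left, Function.comp_apply,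
    laplacian_norm_orthogonalProjectionOnto _ hp, finrank_orthogonal_singleton he,
    ContinuousLinearMap.toSpanSingleton_apply]
  congr 2
  ring

theorem laplacian_comp_axialCoord {F : Type*} [NormedAddCommGroup F] [NormedSpace ℝ F]
    (he : ‖e‖ = 1) (hx : x ∉ ℝ ∙ e) {f : ℂ → F} (hf : ContDiffAt ℝ 2 f (axialCoord e x)) :
    Δ (f ∘ axialCoord e) x = Δ f (axialCoord e x) +
      ((finrank ℝ E - 2 : ℝ) / (axialCoord e x).im) • fderiv ℝ f (axialCoord e x) Complex.I := by
  obtain ⟨n, hn, hen, hz⟩ := exists_hasFDerivAt_axialCoord he hx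
  rw [laplacian_comp_of_fderiv_comp_adjoint_eq_id hf (contDiffAt_axialCoord he hx)
      (by rw [hz.fderiv, innerComplex_comp_adjoint he hn hen]),
    laplacian_axialCoord he hx, map_smul]

end AxialCoord

section Wirtinger

variable {f g : ℂ → ℂ} {z : ℂ}

theorem wdz_congr_of_eventuallyEq (h : f =ᶠ[𝓝 z] g) : wdz f z = wdz g z := by
  simp only [wdz, pdu, pdv, h.fderiv_eq]

theorem wdz_sub (hf : DifferentiableAt ℝ f z) (hg : DifferentiableAt ℝ g z) :
    wdz (fun w ↦ f w - g w) z = wdz f z - wdz g z := by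
  simp only [wdz, pdu, pdv, fderiv_fun_sub hf hg, sub_apply]
  ring

theorem wdz_mul (hf : DifferentiableAt ℝ f z) (hg : DifferentiableAt ℝ g z) :
    wdz (fun w ↦ f w * g w) z = f z * wdz g z + wdz f z * g z := by
  simp only [wdz, pdu, pdv, fderiv_fun_mul hf hg, add_apply, smul_apply, smul_eq_mul]
  ring

theorem wdzbar_mul (hf : DifferentiableAt ℝ f z) (hg : DifferentiableAt ℝ g z) :
    wdzbar (fun w ↦ f w * g w) z = f z * wdzbar g z + wdzbar f z * g z := by
  simp only [wdzbar, pdu, pdv, fderiv_fun_mul hf hg, add_apply, smul_apply, smul_eq_mul]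
  ring

theorem differentiableAt_sub_conj (z : ℂ) : DifferentiableAt ℝ (fun w : ℂ ↦ w - conj w) z :=
  differentiableAt_id.sub Complex.conjCLE.differentiableAt

theorem fderiv_sub_conj_apply (z v : ℂ) :
    fderiv ℝ (fun w : ℂ ↦ w - conj w) z v = v - conj v :=
  congrArg (fun L ↦ L v) ((hasFDerivAt_id z).sub Complex.conjCLE.hasFDerivAt).fderiv

theorem wdz_sub_conj (z : ℂ) : wdz (fun w ↦ w - conj w) z = 1 := by
  simp only [wdz, pdu, pdv, fderiv_sub_conj_apply, map_one, Complex.conj_I]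
  linear_combination -Complex.I_sq

theorem wdzbar_sub_conj (z : ℂ) : wdzbar (fun w ↦ w - conj w) z = -1 := by
  simp only [wdzbar, pdu, pdv, fderiv_sub_conj_apply, map_one, Complex.conj_I]
  linear_combination Complex.I_sq

theorem laplacian_eq_pdu_pdu_add_pdv_pdv (hf : ContDiffAt ℝ 2 f z) :
    Δ f z = pdu (pdu f) z + pdv (pdv f) z := by
  simp only [laplacian_eq_iteratedFDeriv_complexPlane, iteratedFDeriv_two_apply]
  exact congrArg₂ (· + ·) (fderiv_fderiv_apply hf 1 1).symm
    (fderiv_fderiv_apply hf Complex.I Complex.I).symm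

theorem pdu_pdv_eq_pdv_pdu (hf : ContDiffAt ℝ 2 f z) : pdu (pdv f) z = pdv (pdu f) z :=
  calc pdu (pdv f) z = fderiv ℝ (fderiv ℝ f) z 1 Complex.I := fderiv_fderiv_apply hf _ _
    _ = fderiv ℝ (fderiv ℝ f) z Complex.I 1 := hf.isSymmSndFDerivAt (by simp) _ _
    _ = pdv (pdu f) z := (fderiv_fderiv_apply hf _ _).symm

theorem hasFDerivAt_wdzbar (hf : ContDiffAt ℝ 2 f z) :
    HasFDerivAt (wdzbar f)
      ((2⁻¹ : ℂ) • (fderiv ℝ (pdu f) z + Complex.I • fderiv ℝ (pdv f) z)) z := by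
  have hu : HasFDerivAt (pdu f) _ z := (differentiableAt_fderiv_apply hf 1).hasFDerivAt
  have hv : HasFDerivAt (pdv f) _ z := (differentiableAt_fderiv_apply hf Complex.I).hasFDerivAt
  exact (hu.add (hv.const_mul Complex.I)).mul_const (2⁻¹ : ℂ)

theorem wdz_wdzbar (hf : ContDiffAt ℝ 2 f z) : wdz (wdzbar f) z = Δ f z / 4 := by
  rw [laplacian_eq_pdu_pdu_add_pdv_pdv hf]
  calc wdz (wdzbar f) z
      = ((pdu (pdu f) z + Complex.I * pdu (pdv f) z) / 2 -
          Complex.I * ((pdv (pdu f) z + Complex.I * pdv (pdv f) z) / 2)) / 2 := by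
        rw [wdz, pdu, pdv, (hasFDerivAt_wdzbar hf).fderiv]
        simp only [smul_apply, add_apply, smul_eq_mul, inv_mul_eq_div]
        rfl
    _ = (pdu (pdu f) z + pdv (pdv f) z) / 4 := by
        rw [pdu_pdv_eq_pdv_pdu hf]
        linear_combination (-pdv (pdv f) z / 4) * Complex.I_sq

theorem wdz_wdzbar_sub_conj_mul (hf : ContDiffAt ℝ 2 f z) :
    wdz (wdzbar fun w ↦ (w - conj w) * f w) z =
      (z - conj z) * (Δ f z / 4) - (wdz f z - wdzbar f z) := by
  have hfz : DifferentiableAt ℝ f z := hf.differentiableAt two_ne_zero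
  have hfbar : DifferentiableAt ℝ (wdzbar f) z := (hasFDerivAt_wdzbar hf).differentiableAt
  have wdzbar_product : (wdzbar fun w ↦ (w - conj w) * f w) =ᶠ[𝓝 z]
      fun w ↦ (w - conj w) * wdzbar f w - f w := by
    filter_upwards [hf.eventually (by simp)] with w hw
    rw [wdzbar_mul (differentiableAt_sub_conj w) (hw.differentiableAt two_ne_zero), wdzbar_sub_conj]
    ring
  rw [wdz_congr_of_eventuallyEq wdzbar_product,
    wdz_sub ((differentiableAt_sub_conj z).fun_mul hfbar) hfz,
    wdz_mul (differentiableAt_sub_conj z) hfbar, wdz_wdzbar hf, wdz_sub_conj]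
  ring

theorem four_mul_wdz_wdzbar_eq_laplacian_add (hf : ContDiffAt ℝ 2 f z) (hz : z.im ≠ 0) (lam : ℝ) :
    4 * (1 / (z - conj z) * wdz (wdzbar fun w ↦ (w - conj w) * f w) z +
        ((1 - lam : ℝ) : ℂ) / (z - conj z) * (wdz f z - wdzbar f z)) =
      Δ f z + ((2 * lam / z.im : ℝ) : ℂ) * pdv f z := by
  have hz' : (z.im : ℂ) ≠ 0 := Complex.ofReal_ne_zero.mpr hz
  have wirtinger_sub : wdz f z - wdzbar f z = -(Complex.I * pdv f z) := by
    rw [wdz, wdzbar]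
    ring
  rw [wdz_wdzbar_sub_conj_mul hf, wirtinger_sub, Complex.sub_conj]
  push_cast
  field_simp
  ring

end Wirtinger

theorem lap_eq_laplacian {D : ℕ} {h : EuclideanSpace ℝ (Fin D) → ℂ} {x : EuclideanSpace ℝ (Fin D)}
    (hh : ContDiffAt ℝ 2 h x) : lap h x = Δ h x := by
  rw [laplacian_eq_sum_fderiv_fderiv (EuclideanSpace.basisFun (Fin D) ℝ)]
  simp only [lap, fderiv_fderiv_apply hh, EuclideanSpace.basisFun_apply]

theorem effective_laplace_equation_general {E : Type*} [NormedAddCommGroup E]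
    [InnerProductSpace ℝ E] [FiniteDimensional ℝ E] {e x : E} (he : ‖e‖ = 1)
    (hx : ∀ t : ℝ, x ≠ t • e) {f : ℂ → ℂ} (hf : ContDiffOn ℝ 2 f {z : ℂ | 0 < z.im}) :
    let lam : ℝ := (finrank ℝ E : ℝ) / 2 - 1
    let z : ℂ := axialCoord e x
    ContDiffAt ℝ 2 (f ∘ axialCoord e) x ∧
      Δ (f ∘ axialCoord e) x =
        4 * (1 / (z - conj z) * wdz (wdzbar fun w ↦ (w - conj w) * f w) z +
          ((1 - lam : ℝ) : ℂ) / (z - conj z) * (wdz f z - wdzbar f z)) ∧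
      Δ (f ∘ axialCoord e) x =
        pdu (pdu f) z + pdv (pdv f) z + ((((finrank ℝ E : ℝ) - 2) / z.im : ℝ) : ℂ) * pdv f z := by
  intro lam z
  have off_axis : x ∉ ℝ ∙ e := fun hmem ↦
    let ⟨t, ht⟩ := Submodule.mem_span_singleton.mp hmem
    hx t ht.symm
  have im_pos : 0 < z.im := axialCoord_im_pos off_axis
  have hfz : ContDiffAt ℝ 2 f z :=
    hf.contDiffAt ((isOpen_lt continuous_const Complex.continuous_im).mem_nhds im_pos)
  have radial_form : Δ (f ∘ axialCoord e) x =
      Δ f z + ((((finrank ℝ E : ℝ) - 2) / z.im : ℝ) : ℂ) * pdv f z :=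
    laplacian_comp_axialCoord he off_axis hfz
  have two_mul_lam : 2 * lam = finrank ℝ E - 2 := by ring
  refine ⟨hfz.comp x (contDiffAt_axialCoord he off_axis), ?_, ?_⟩
  · rw [four_mul_wdz_wdzbar_eq_laplacian_add hfz im_pos.ne', two_mul_lam, radial_form]
  · rw [radial_form, laplacian_eq_pdu_pdu_add_pdv_pdv hfz]

/-- The effective Laplace equation: the Euclidean Laplacian of
`h(x) = f(z(x))`, `z(x) = ⟨x,e⟩ + i‖x − ⟨x,e⟩e‖`, in terms of the complex
variable `z`, for `f` twice continuously differentiable on the upper half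
plane. -/
theorem effective_laplace_equation
    (D : ℕ) (hD : 4 ≤ D) (hDeven : Even D)
    (e : EuclideanSpace ℝ (Fin D)) (he : ‖e‖ = 1)
    (f : ℂ → ℂ) (hf : ContDiffOn ℝ 2 f {z : ℂ | 0 < z.im}) :
    let lam : ℝ := (D : ℝ) / 2 - 1
    let zf : EuclideanSpace ℝ (Fin D) → ℂ :=
      fun x => ((⟪x, e⟫ : ℝ) : ℂ) + (‖x - (⟪x, e⟫ : ℝ) • e‖ : ℝ) * Complex.I
    let h : EuclideanSpace ℝ (Fin D) → ℂ := fun x => f (zf x)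
    let S : Set (EuclideanSpace ℝ (Fin D)) := {x | ∀ t : ℝ, x ≠ t • e}
    ContDiffOn ℝ 2 h S ∧
    ∀ x ∈ S,
      lap h x =
        4 * ((1 / (zf x - (starRingEnd ℂ) (zf x))) *
              wdz (fun w => wdzbar (fun w' => (w' - (starRingEnd ℂ) w') * f w') w) (zf x)
            + (((1 - lam : ℝ) : ℂ) / (zf x - (starRingEnd ℂ) (zf x))) *
              (wdz f (zf x) - wdzbar f (zf x))) ∧
      lap h x =
        pdu (fun w => pdu f w) (zf x) + pdv (fun w => pdv f w) (zf x)
          + (((((D : ℝ) - 2) / (zf x).im : ℝ)) : ℂ) * pdv f (zf x) := by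
  intro lam zf h S
  have general (x) (hx : x ∈ S) := effective_laplace_equation_general he hx hf
  rw [finrank_euclideanSpace_fin] at general
  exact ⟨fun x hx ↦ (general x hx).1.contDiffWithinAt,
    fun x hx ↦ lap_eq_laplacian (general x hx).1 ▸ (general x hx).2⟩
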